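/- arXiv:2006.07138 — 2 statements merged into one kernel-verified Lean document; each statement's English description precedes it below -/
import Mathlib

section
/- Let n ≥ 1, M' ≥ 1, s ∈ (0,1), K > 0 and ε > 0. There exists λ = λ(n,s,K,ε) > 1 with the following property: for every t ≥ s, every measurable map u : ℝⁿ → ℝ^{M'} with |u(x)| ≤ K for almost every x, every x₀ ∈ ℝⁿ and every r ∈ (0,1], if ∫_{B(x₀, λ r^{s/t})} ∫_{B(x₀, λ r^{s/t})} |u(x)−u(y)|^{n/s}/|x−y|^{n+t·n/s} dx dy < ε/2, then ∫_{B(x₀,r)} ∫_{ℝⁿ} |u(x)−u(y)|^{n/s}/|x−y|^{n+t·n/s} dx dy < ε. -/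
open MeasureTheory
open scoped ENNReal

noncomputable section

/-- Euclidean space `ℝᵏ`. -/
abbrev Euc (k : ℕ) : Type _ := EuclideanSpace ℝ (Fin k)

/-- Kernel `|u(x)-u(y)|^{n/s} / |x-y|^{n+t·n/s}` in `[0,∞]`. -/
def ker (n M : ℕ) (s t : ℝ) (u : Euc n → Euc M) (x y : Euc n) : ℝ≥0∞ :=
  ENNReal.ofReal (‖u x - u y‖ ^ ((n : ℝ) / s) / ‖x - y‖ ^ ((n : ℝ) + t * ((n : ℝ) / s)))

/-!
Only pairs with `x ∈ B(x₀, r)` and `y ∉ B(x₀, R)` have to be estimated, where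
`R = λ r ^ (s / t) ≥ 2r`. There `‖x - y‖ ≥ R / 2`, so by polar coordinates the tail is at most a
constant times `r ^ n * (R / 2) ^ (-(t * n / s))`. The radius is chosen so that the powers of `r`
cancel: what remains is `(λ / 2) ^ (-(t * n / s)) ≤ 2 / λ`, which is small uniformly in `t`.
-/

open Metric Module Set

theorem setLIntegral_lintegral_le_add {α : Type*} [MeasurableSpace α] {μ : Measure α} {A B : Set α}
    (hAB : A ⊆ B) (hB : MeasurableSet B) {f : α → α → ℝ≥0∞} {T : ℝ≥0∞}
    (hT : ∀ᵐ x ∂μ.restrict A, ∫⁻ y in Bᶜ, f x y ∂μ ≤ T) :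
    ∫⁻ x in A, ∫⁻ y, f x y ∂μ ∂μ ≤ ∫⁻ x in B, ∫⁻ y in B, f x y ∂μ ∂μ + T * μ A :=
  calc ∫⁻ x in A, ∫⁻ y, f x y ∂μ ∂μ
      ≤ ∫⁻ x in A, (∫⁻ y in B, f x y ∂μ + T) ∂μ := by
        refine lintegral_mono_ae (hT.mono fun x hx => ?_)
        rw [← lintegral_add_compl _ hB]
        gcongr
    _ = ∫⁻ x in A, ∫⁻ y in B, f x y ∂μ ∂μ + T * μ A := by
        rw [lintegral_add_right _ measurable_const, setLIntegral_const]
    _ ≤ ∫⁻ x in B, ∫⁻ y in B, f x y ∂μ ∂μ + T * μ A := by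
        gcongr

theorem pow_mul_mul_rpow_div_rpow_neg {d : ℕ} {s t r a : ℝ} (hs : s ≠ 0) (ht : t ≠ 0) (hr : 0 < r)
    (ha : 0 ≤ a) : r ^ d * (a * r ^ (s / t)) ^ (-(t * (d / s))) = a ^ (-(t * (d / s))) := by
  have hexp : s / t * -(t * (d / s)) = -(d : ℝ) := by field_simp
  rw [Real.mul_rpow ha (by positivity), ← Real.rpow_mul hr.le, hexp, Real.rpow_neg hr.le,
    Real.rpow_natCast]
  field_simp

section Gagliardo

variable {E F : Type*} [NormedAddCommGroup E] [NormedSpace ℝ E] [SeminormedAddCommGroup F]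
  {t p K : ℝ} {u : E → F}

/-- The integrand `‖u x - u y‖ ^ p / ‖x - y‖ ^ (d + t p)` of the Gagliardo seminorm of the
fractional Sobolev space `W^{t,p}` on a space of dimension `d`, as an element of `[0, ∞]`; its value
at `x = y` is a junk value. -/
def gagliardoKernel (t p : ℝ) (u : E → F) (x y : E) : ℝ≥0∞ :=
  ENNReal.ofReal (‖u x - u y‖ ^ p / ‖x - y‖ ^ (finrank ℝ E + t * p))

theorem ker_eq_gagliardoKernel (n M : ℕ) (s t : ℝ) (u : Euc n → Euc M) :
    ker n M s t u = gagliardoKernel t (n / s) u := by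
  ext x y
  simp only [ker, gagliardoKernel, finrank_euclideanSpace_fin]

theorem gagliardoKernel_le (hp : 0 ≤ p) {x y : E} (hx : ‖u x‖ ≤ K) (hy : ‖u y‖ ≤ K) :
    gagliardoKernel t p u x y ≤
      ENNReal.ofReal ((2 * K) ^ p) * ENNReal.ofReal (‖y - x‖ ^ (-(finrank ℝ E + t * p))) := by
  have hK : 0 ≤ K := (norm_nonneg _).trans hx
  have hdiff : ‖u x - u y‖ ≤ 2 * K := by linarith [norm_sub_le (u x) (u y)]
  rw [gagliardoKernel, ← ENNReal.ofReal_mul (by positivity), norm_sub_rev x y,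
    Real.rpow_neg (norm_nonneg _), ← div_eq_mul_inv]
  gcongr

variable [FiniteDimensional ℝ E] [Nontrivial E] [MeasurableSpace E] [BorelSpace E]
  (μ : Measure E) [μ.IsAddHaarMeasure] {r R q ρ : ℝ}

theorem lintegral_fun_norm_sub_addHaar {f : ℝ → ℝ} (hf : 0 ≤ f)
    (hint : IntegrableOn (fun a => a ^ (finrank ℝ E - 1) • f a) (Ioi 0)) (x : E) :
    ∫⁻ y, ENNReal.ofReal (f ‖y - x‖) ∂μ =
      ENNReal.ofReal (finrank ℝ E * μ.real (ball 0 1) *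
        ∫ a in Ioi 0, a ^ (finrank ℝ E - 1) • f a) :=
  calc ∫⁻ y, ENNReal.ofReal (f ‖y - x‖) ∂μ
      = ∫⁻ y, ENNReal.ofReal (f ‖y‖) ∂μ :=
        lintegral_sub_right_eq_self (fun y => ENNReal.ofReal (f ‖y‖)) x
    _ = ENNReal.ofReal (∫ y, f ‖y‖ ∂μ) :=
        (ofReal_integral_eq_lintegral_ofReal ((integrable_fun_norm_addHaar μ).2 hint)
          (.of_forall fun _ => hf _)).symm
    _ = ENNReal.ofReal (finrank ℝ E * μ.real (ball 0 1) *
          ∫ a in Ioi 0, a ^ (finrank ℝ E - 1) • f a) := by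
        rw [integral_fun_norm_addHaar, nsmul_eq_mul, smul_eq_mul, mul_assoc]

theorem lintegral_compl_ball_norm_sub_rpow (hq : 0 < q) (hρ : 0 < ρ) (x : E) :
    ∫⁻ y in (ball x ρ)ᶜ, ENNReal.ofReal (‖y - x‖ ^ (-(finrank ℝ E + q))) ∂μ =
      ENNReal.ofReal (finrank ℝ E * μ.real (ball 0 1) * (ρ ^ (-q) / q)) := by
  set f : ℝ → ℝ := (Ici ρ).indicator (· ^ (-(finrank ℝ E + q)))
  have hf : 0 ≤ f := fun a =>
    indicator_nonneg (fun b hb => Real.rpow_nonneg (hρ.le.trans hb) _) a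
  have hpolar : EqOn (fun a => a ^ (finrank ℝ E - 1) • f a)
      ((Ici ρ).indicator (· ^ (-q - 1))) (Ioi 0) := by
    intro a (ha : 0 < a)
    by_cases hρa : ρ ≤ a
    · simp only [f, indicator_of_mem (mem_Ici.2 hρa), smul_eq_mul]
      rw [← Real.rpow_natCast, ← Real.rpow_add ha, Nat.cast_pred finrank_pos]
      ring_nf
    · simp [f, hρa]
  have hsub : Ioi 0 ∩ Ici ρ = Ici ρ := inter_eq_right.2 fun a ha => hρ.trans_le ha
  have hint : IntegrableOn (fun a => a ^ (finrank ℝ E - 1) • f a) (Ioi 0) := by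
    rw [integrableOn_congr_fun hpolar measurableSet_Ioi, IntegrableOn,
      integrable_indicator_iff measurableSet_Ici, IntegrableOn,
      Measure.restrict_restrict measurableSet_Ici, inter_comm, hsub, ← IntegrableOn,
      integrableOn_Ici_iff_integrableOn_Ioi]
    exact integrableOn_Ioi_rpow_of_lt (by linarith) hρ
  have hindicator : (ball x ρ)ᶜ.indicator
      (fun y => ENNReal.ofReal (‖y - x‖ ^ (-(finrank ℝ E + q)))) =
        fun y => ENNReal.ofReal (f ‖y - x‖) := by
    ext y
    by_cases hy : ρ ≤ ‖y - x‖ <;> simp [f, hy, dist_eq_norm]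
  rw [← lintegral_indicator measurableSet_ball.compl, hindicator,
    lintegral_fun_norm_sub_addHaar μ hf hint, setIntegral_congr_fun measurableSet_Ioi hpolar,
    setIntegral_indicator measurableSet_Ici, hsub, integral_Ici_eq_integral_Ioi,
    integral_Ioi_rpow_of_lt (by linarith) hρ, sub_add_cancel, neg_div_neg_eq]

variable {μ}

theorem lintegral_compl_ball_gagliardoKernel_le (hp : 0 ≤ p) (htp : 0 < t * p) (hρ : 0 < ρ)
    (hu : ∀ᵐ y ∂μ, ‖u y‖ ≤ K) {x : E} (hx : ‖u x‖ ≤ K) :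
    ∫⁻ y in (ball x ρ)ᶜ, gagliardoKernel t p u x y ∂μ ≤
      ENNReal.ofReal ((2 * K) ^ p *
        (finrank ℝ E * μ.real (ball 0 1) * (ρ ^ (-(t * p)) / (t * p)))) := by
  have hK : 0 ≤ K := (norm_nonneg _).trans hx
  rw [ENNReal.ofReal_mul (by positivity), ← lintegral_compl_ball_norm_sub_rpow μ htp hρ x,
    ← lintegral_const_mul' _ _ ENNReal.ofReal_ne_top]
  exact lintegral_mono_ae ((ae_restrict_of_ae hu).mono fun y hy => gagliardoKernel_le hp hx hy)

theorem lintegral_ball_gagliardoKernel_le (hp : 0 ≤ p) (htp : finrank ℝ E ≤ t * p) (hK : 0 ≤ K)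
    (hu : ∀ᵐ x ∂μ, ‖u x‖ ≤ K) (x₀ : E) (hr : 0 < r) (hrR : 2 * r ≤ R) :
    ∫⁻ x in ball x₀ r, ∫⁻ y, gagliardoKernel t p u x y ∂μ ∂μ ≤
      ∫⁻ x in ball x₀ R, ∫⁻ y in ball x₀ R, gagliardoKernel t p u x y ∂μ ∂μ +
        ENNReal.ofReal ((2 * K) ^ p * μ.real (ball (0 : E) 1) ^ 2 *
          (r ^ finrank ℝ E * (R / 2) ^ (-(t * p)))) := by
  set d := finrank ℝ E
  set ω := μ.real (ball (0 : E) 1) with hω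
  have htp_pos : 0 < t * p := (Nat.cast_pos.2 finrank_pos).trans_le htp
  set T := ENNReal.ofReal ((2 * K) ^ p * (d * ω * ((R / 2) ^ (-(t * p)) / (t * p))))
  have htail : ∀ᵐ x ∂μ.restrict (ball x₀ r),
      ∫⁻ y in (ball x₀ R)ᶜ, gagliardoKernel t p u x y ∂μ ≤ T := by
    filter_upwards [ae_restrict_of_ae hu, ae_restrict_mem measurableSet_ball] with x hux hx
    have hball : ball x (R / 2) ⊆ ball x₀ R :=
      ball_subset_ball' (by linarith [mem_ball.1 hx])
    exact (lintegral_mono_set (compl_subset_compl.2 hball)).trans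
      (lintegral_compl_ball_gagliardoKernel_le hp htp_pos (by linarith) hu hux)
  have hvol : μ (ball x₀ r) = ENNReal.ofReal (r ^ d * ω) := by
    rw [Measure.addHaar_ball_of_pos μ x₀ hr, ENNReal.ofReal_mul (by positivity), hω,
      ofReal_measureReal]
  have hT : T * μ (ball x₀ r) ≤
      ENNReal.ofReal ((2 * K) ^ p * ω ^ 2 * (r ^ d * (R / 2) ^ (-(t * p)))) := by
    have hR : 0 < R := by linarith
    rw [hvol, ← ENNReal.ofReal_mul (by positivity)]
    refine ENNReal.ofReal_le_ofReal ?_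
    calc (2 * K) ^ p * (d * ω * ((R / 2) ^ (-(t * p)) / (t * p))) * (r ^ d * ω)
        = (2 * K) ^ p * ω ^ 2 * (r ^ d * (R / 2) ^ (-(t * p))) * (d / (t * p)) := by ring
      _ ≤ (2 * K) ^ p * ω ^ 2 * (r ^ d * (R / 2) ^ (-(t * p))) :=
          mul_le_of_le_one_right (by positivity) ((div_le_one htp_pos).2 htp)
  exact (setLIntegral_lintegral_le_add (ball_subset_ball (by linarith)) measurableSet_ball
    htail).trans (by gcongr)

theorem lintegral_ball_gagliardoKernel_le_of_critical {s lam : ℝ} (hs : 0 < s) (hst : s ≤ t)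
    (hK : 0 ≤ K) (hu : ∀ᵐ x ∂μ, ‖u x‖ ≤ K) (x₀ : E) (hr : 0 < r) (hr1 : r ≤ 1) (hlam : 2 ≤ lam) :
    ∫⁻ x in ball x₀ r, ∫⁻ y, gagliardoKernel t (finrank ℝ E / s) u x y ∂μ ∂μ ≤
      ∫⁻ x in ball x₀ (lam * r ^ (s / t)), ∫⁻ y in ball x₀ (lam * r ^ (s / t)),
        gagliardoKernel t (finrank ℝ E / s) u x y ∂μ ∂μ +
        ENNReal.ofReal ((2 * K) ^ (finrank ℝ E / s) * μ.real (ball (0 : E) 1) ^ 2 * (2 / lam)) := by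
  have ht : 0 < t := hs.trans_le hst
  have hd : (1 : ℝ) ≤ finrank ℝ E := Nat.one_le_cast.2 finrank_pos
  have hdt : finrank ℝ E ≤ t * (finrank ℝ E / s) := by
    rw [mul_div_left_comm]
    exact le_mul_of_one_le_right (by positivity) ((one_le_div hs).2 hst)
  have hrR : 2 * r ≤ lam * r ^ (s / t) := by
    gcongr
    exact Real.self_le_rpow_of_le_one hr.le hr1 ((div_le_one ht).2 hst)
  have hscale : r ^ finrank ℝ E * (lam * r ^ (s / t) / 2) ^ (-(t * (finrank ℝ E / s))) ≤ 2 / lam :=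
    calc r ^ finrank ℝ E * (lam * r ^ (s / t) / 2) ^ (-(t * (finrank ℝ E / s)))
        = (lam / 2) ^ (-(t * (finrank ℝ E / s))) := by
          rw [mul_div_right_comm,
            pow_mul_mul_rpow_div_rpow_neg hs.ne' ht.ne' hr (by positivity)]
      _ ≤ (lam / 2) ^ (-1 : ℝ) :=
          Real.rpow_le_rpow_of_exponent_le (by linarith) (by linarith)
      _ = 2 / lam := by rw [Real.rpow_neg_one, inv_div]
  refine (lintegral_ball_gagliardoKernel_le (by positivity) hdt hK hu x₀ hr hrR).trans ?_
  gcongr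

variable (F μ) in
theorem stmt6_general {s K ε : ℝ} (hs : 0 < s) (hK : 0 ≤ K) (hε : 0 < ε) :
    ∃ lam : ℝ, 1 < lam ∧
      ∀ t : ℝ, s ≤ t →
      ∀ u : E → F, (∀ᵐ x ∂μ, ‖u x‖ ≤ K) →
      ∀ (x₀ : E) (r : ℝ), 0 < r → r ≤ 1 →
        ∫⁻ x in ball x₀ (lam * r ^ (s / t)), ∫⁻ y in ball x₀ (lam * r ^ (s / t)),
          gagliardoKernel t (finrank ℝ E / s) u x y ∂μ ∂μ < ENNReal.ofReal (ε / 2) →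
        ∫⁻ x in ball x₀ r, ∫⁻ y, gagliardoKernel t (finrank ℝ E / s) u x y ∂μ ∂μ <
          ENNReal.ofReal ε := by
  set C : ℝ := (2 * K) ^ (finrank ℝ E / s) * μ.real (ball (0 : E) 1) ^ 2
  have hC : 0 ≤ C := by positivity
  set lam : ℝ := 2 + 4 * C / ε
  have hlam : 2 ≤ lam := le_add_of_nonneg_right (by positivity)
  have hClam : C * (2 / lam) ≤ ε / 2 := by
    have hlamε : lam * ε = 2 * ε + 4 * C := by simp only [lam]; field_simp
    rw [mul_div_assoc', div_le_div_iff₀ (by linarith) two_pos]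
    linarith
  refine ⟨lam, by linarith, fun t hst u hu x₀ r hr hr1 hsmall => ?_⟩
  refine (lintegral_ball_gagliardoKernel_le_of_critical hs hst hK hu x₀ hr hr1 hlam).trans_lt ?_
  rw [← add_halves ε, ENNReal.ofReal_add (by positivity) (by positivity)]
  exact ENNReal.add_lt_add_of_lt_of_le ENNReal.ofReal_ne_top hsmall
    (ENNReal.ofReal_le_ofReal hClam)

end Gagliardo

/-- smallness of the energy on a (suitably enlarged) ball implies smallness of
the full tail energy of the ball. -/
theorem stmt6 (n M : ℕ) (hn : 1 ≤ n) (hM : 1 ≤ M) (s K ε : ℝ)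
    (hs : 0 < s) (hs1 : s < 1) (hK : 0 < K) (hε : 0 < ε) :
    ∃ lam : ℝ, 1 < lam ∧
      ∀ t : ℝ, s ≤ t →
      ∀ u : Euc n → Euc M, Measurable u → (∀ᵐ x, ‖u x‖ ≤ K) →
      ∀ (x₀ : Euc n) (r : ℝ), 0 < r → r ≤ 1 →
        (∫⁻ x in Metric.ball x₀ (lam * r ^ (s / t)),
            ∫⁻ y in Metric.ball x₀ (lam * r ^ (s / t)), ker n M s t u x y)
          < ENNReal.ofReal (ε / 2) →
        (∫⁻ x in Metric.ball x₀ r, ∫⁻ y, ker n M s t u x y) < ENNReal.ofReal ε := by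
  have : NeZero n := ⟨Nat.one_le_iff_ne_zero.1 hn⟩
  obtain ⟨lam, hlam, h⟩ := stmt6_general (Euc M) (volume : Measure (Euc n)) hs hK.le hε
  refine ⟨lam, hlam, fun t hst u _ => ?_⟩
  simpa only [ker_eq_gagliardoKernel, finrank_euclideanSpace_fin] using h t hst u
end
end

section
/- Let n ≥ 1, m ≥ 1 and s ∈ (0,1). There exists ε = ε(n,m,s) > 0 such that every continuous map u : 𝕊ⁿ → 𝕊^m satisfying E_{s,n/s}(u) = ∫_{𝕊ⁿ}∫_{𝕊ⁿ} |u(x)−u(y)|^{n/s}/|x−y|^{2n} dμ(x) dμ(y) < ε is homotopic to a constant map. -/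
/-! Average `u` against the tent of slope `l` around `x`. If such an average vanishes for a tent
supported in a ball of radius `r`, then, since `|u| = 1`, every value of `u` is on average at
distance at least `1` from the values of `u` on that ball. The ball has measure at least a multiple
of `r ^ n` and `|x - y| ≤ 2 * r` on it, so up to a constant the energy is at least
`r ^ n * r ^ n / r ^ (2 * n)`, a positive bound independent of `r`. Hence below this threshold no
average vanishes, and decreasing `l` to `0`, where the average no longer depends on `x`, deforms the
averages to a constant inside the punctured space. For `l` large the average at `x` is close to a
positive multiple of `u x`, so the segment joining the two avoids the origin; composing both
homotopies and normalising contracts `u` in the sphere. -/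

open MeasureTheory
open scoped ENNReal

noncomputable section

/-- The unit sphere `𝕊ᵏ ⊆ ℝ^{k+1}`. -/
abbrev Sph (k : ℕ) : Type _ := ↥(Metric.sphere (0 : EuclideanSpace ℝ (Fin (k + 1))) 1)

/-- `f` and `g` are homotopic maps. -/
def Homotopic {X Y : Type*} [TopologicalSpace X] [TopologicalSpace Y] (f g : X → Y) : Prop :=
  ∃ H : unitInterval × X → Y, Continuous H ∧ (∀ x, H (0, x) = f x) ∧ (∀ x, H (1, x) = g x)

/-- The energy `E_{s,n/s}(u) = ∫∫ |u(x)-u(y)|^{n/s}/|x-y|^{2n} dμ dμ` of a map `𝕊ⁿ → 𝕊^m`,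
with `μ` the `n`-dimensional Hausdorff measure on `𝕊ⁿ`. -/
def sphEnergy (n m : ℕ) (s : ℝ) (u : Sph n → Sph m) : ℝ≥0∞ :=
  ∫⁻ x, ∫⁻ y,
    ENNReal.ofReal
      (‖(u x : EuclideanSpace ℝ (Fin (m + 1))) - (u y : EuclideanSpace ℝ (Fin (m + 1)))‖
          ^ ((n : ℝ) / s) / dist x y ^ (2 * (n : ℝ)))
    ∂(μH[(n : ℝ)] : Measure (Sph n)) ∂(μH[(n : ℝ)] : Measure (Sph n))

open Metric Set Topology
open scoped Manifold unitInterval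

section Homotopy

variable {X F : Type*} [TopologicalSpace X]

theorem homotopic_of_segment_subset [AddCommGroup F] [TopologicalSpace F]
    [IsTopologicalAddGroup F] [Module ℝ F] [ContinuousSMul ℝ F] {S : Set F} {f g : C(X, S)}
    (h : ∀ x, segment ℝ (f x : F) (g x) ⊆ S) : f.Homotopic g := by
  let ι : C(S, F) := ⟨Subtype.val, continuous_subtype_val⟩
  let H := ContinuousMap.Homotopy.affine (ι.comp f) (ι.comp g)
  have hmem (q : I × X) : H q ∈ S := h q.2 <| by
    rw [segment_eq_image_lineMap]
    exact ⟨q.1, q.1.2, rfl⟩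
  exact ⟨⟨⟨fun q => ⟨H q, hmem q⟩, H.continuous.subtype_mk hmem⟩,
    fun x => Subtype.ext (H.apply_zero x), fun x => Subtype.ext (H.apply_one x)⟩⟩

variable [NormedAddCommGroup F] [NormedSpace ℝ F]

theorem nullhomotopic_of_nullhomotopic_compl_zero {u : C(X, sphere (0 : F) 1)}
    {f : C(X, ({0}ᶜ : Set F))} (hf : f.Nullhomotopic) (hfu : ∀ x, (f x : F) = u x) :
    u.Nullhomotopic := by
  let normalize : C(({0}ᶜ : Set F), sphere (0 : F) 1) :=
    ⟨fun v => (homeomorphUnitSphereProd F v).1, by fun_prop⟩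
  have hu : normalize.comp f = u := by
    ext x
    simp [normalize, hfu x]
  exact hu ▸ hf.comp_right normalize

theorem zero_notMem_segment_of_norm_sub_smul_lt {v e : F} {W : ℝ}
    (h : ‖e - W • v‖ < W * ‖v‖) : (0 : F) ∉ segment ℝ v e := by
  rintro ⟨a, b, ha, hb, hab, h0⟩
  have hWv : 0 < W * ‖v‖ := (norm_nonneg _).trans_lt h
  have hv : 0 < ‖v‖ := (norm_nonneg v).lt_of_ne fun hv => by simp [← hv] at hWv
  have hW : 0 < W := pos_of_mul_pos_left hWv hv.le
  have hpos : 0 ≤ a + b * W := by positivity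
  have hnorm : b * ‖e - W • v‖ = (a + b * W) * ‖v‖ := by
    have heq : b • (e - W • v) = -((a + b * W) • v) := by
      rw [eq_neg_iff_add_eq_zero, ← h0]
      module
    simpa only [norm_neg, norm_smul, Real.norm_of_nonneg hb, Real.norm_of_nonneg hpos]
      using congrArg norm heq
  rcases hb.eq_or_lt with rfl | hb
  · simp_all
  · nlinarith [mul_lt_mul_of_pos_left h hb, mul_nonneg ha hv.le]

end Homotopy

section WeightedMean

variable {X F : Type*} [MeasurableSpace X] {μ : Measure X} [NormedAddCommGroup F] [NormedSpace ℝ F]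
  {w : X → ℝ} {f : X → F}

theorem norm_integral_smul_sub_le [CompleteSpace F] (hw : Integrable w μ) (hw0 : 0 ≤ w)
    (hwf : Integrable (fun y => w y • f y) μ) {v : F} {δ : ℝ}
    (h : ∀ y, w y ≠ 0 → ‖f y - v‖ ≤ δ) :
    ‖∫ y, w y • f y ∂μ - (∫ y, w y ∂μ) • v‖ ≤ δ * ∫ y, w y ∂μ := by
  have hsub : ∫ y, w y • (f y - v) ∂μ = ∫ y, w y • f y ∂μ - (∫ y, w y ∂μ) • v := by
    simp only [smul_sub]
    rw [integral_sub hwf (hw.smul_const v), integral_smul_const]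
  rw [← hsub, ← integral_const_mul]
  refine norm_integral_le_of_norm_le (hw.const_mul δ) (.of_forall fun y => ?_)
  rw [norm_smul, Real.norm_of_nonneg (hw0 y), mul_comm]
  rcases eq_or_ne (w y) 0 with hy | hy
  · simp [hy]
  · exact mul_le_mul_of_nonneg_right (h y hy) (hw0 y)

theorem lintegral_le_lintegral_mul_norm_sub [CompleteSpace F] (hw : Integrable w μ) (hw0 : 0 ≤ w)
    (hwf : Integrable (fun y => w y • f y) μ) (h0 : ∫ y, w y • f y ∂μ = 0) {v : F}
    (hv : ‖v‖ = 1) :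
    ∫⁻ y, ENNReal.ofReal (w y) ∂μ ≤ ∫⁻ y, ENNReal.ofReal (w y * ‖v - f y‖) ∂μ := by
  have hsub : ∫ y, w y • (v - f y) ∂μ = (∫ y, w y ∂μ) • v := by
    simp only [smul_sub]
    rw [integral_sub (hw.smul_const v) hwf, integral_smul_const, h0, sub_zero]
  calc ∫⁻ y, ENNReal.ofReal (w y) ∂μ = ‖∫ y, w y • (v - f y) ∂μ‖ₑ := by
        rw [hsub, ← ofReal_integral_eq_lintegral_ofReal hw (.of_forall hw0), ← ofReal_norm,
          norm_smul, hv, mul_one, Real.norm_of_nonneg (integral_nonneg hw0)]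
    _ ≤ ∫⁻ y, ‖w y • (v - f y)‖ₑ ∂μ := enorm_integral_le_lintegral_enorm _
    _ = ∫⁻ y, ENNReal.ofReal (w y * ‖v - f y‖) ∂μ := by
        refine lintegral_congr fun y => ?_
        rw [← ofReal_norm, norm_smul, Real.norm_of_nonneg (hw0 y)]

theorem le_half_add_two_rpow_mul_rpow {t p : ℝ} (ht0 : 0 ≤ t) (ht2 : t ≤ 2) (hp : 0 ≤ p) :
    t ≤ 1 / 2 + 2 ^ (p + 1) * t ^ p := by
  rcases le_total t (1 / 2) with ht | ht
  · have : 0 ≤ (2 : ℝ) ^ (p + 1) * t ^ p := by positivity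
    linarith
  · have hone : 1 ≤ (2 * t) ^ p := Real.one_le_rpow (by linarith) hp
    rw [Real.mul_rpow zero_le_two ht0] at hone
    rw [Real.rpow_add_one two_ne_zero]
    linarith

theorem lintegral_le_mul_lintegral_mul_norm_sub_rpow [CompleteSpace F] (hw : Integrable w μ)
    (hw0 : 0 ≤ w) (hwf : Integrable (fun y => w y • f y) μ) (hf : ∀ y, ‖f y‖ = 1)
    (h0 : ∫ y, w y • f y ∂μ = 0) {v : F} (hv : ‖v‖ = 1) {p : ℝ} (hp : 0 ≤ p) :
    ∫⁻ y, ENNReal.ofReal (w y) ∂μ ≤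
      ENNReal.ofReal (2 ^ (p + 2)) * ∫⁻ y, ENNReal.ofReal (w y * ‖v - f y‖ ^ p) ∂μ := by
  set W := ∫⁻ y, ENNReal.ofReal (w y) ∂μ
  set J := ∫⁻ y, ENNReal.ofReal (w y * ‖v - f y‖ ^ p) ∂μ
  have hWtop : W ≠ ∞ := hw.lintegral_lt_top.ne
  have hpointwise (y : X) : ENNReal.ofReal (w y * ‖v - f y‖) ≤ 2⁻¹ * ENNReal.ofReal (w y) +
      ENNReal.ofReal (2 ^ (p + 1)) * ENNReal.ofReal (w y * ‖v - f y‖ ^ p) := by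
    have hnorm : ‖v - f y‖ ≤ 2 := (norm_sub_le _ _).trans (by rw [hv, hf]; norm_num)
    have hreal := mul_le_mul_of_nonneg_left
      (le_half_add_two_rpow_mul_rpow (norm_nonneg (v - f y)) hnorm hp) (hw0 y)
    have hhalf : (2⁻¹ : ℝ≥0∞) = ENNReal.ofReal (1 / 2) := by
      rw [one_div, ENNReal.ofReal_inv_of_pos two_pos, ENNReal.ofReal_ofNat]
    have hwp : 0 ≤ w y * ‖v - f y‖ ^ p := mul_nonneg (hw0 y) (by positivity)
    rw [hhalf, ← ENNReal.ofReal_mul (by norm_num), ← ENNReal.ofReal_mul (by positivity),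
      ← ENNReal.ofReal_add (mul_nonneg (by norm_num) (hw0 y)) (by positivity)]
    exact ENNReal.ofReal_le_ofReal (hreal.trans_eq (by ring))
  have hsum : W ≤ 2⁻¹ * W + ENNReal.ofReal (2 ^ (p + 1)) * J := calc
    W ≤ ∫⁻ y, ENNReal.ofReal (w y * ‖v - f y‖) ∂μ :=
        lintegral_le_lintegral_mul_norm_sub hw hw0 hwf h0 hv
    _ ≤ _ := lintegral_mono hpointwise
    _ = 2⁻¹ * W + ENNReal.ofReal (2 ^ (p + 1)) * J := by
        rw [lintegral_add_left' (hw.aestronglyMeasurable.aemeasurable.ennreal_ofReal.const_mul _),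
          lintegral_const_mul' _ _ (by finiteness), lintegral_const_mul' _ _ (by finiteness)]
  have hhalf : 2⁻¹ * W ≤ ENNReal.ofReal (2 ^ (p + 1)) * J := by
    refine (ENNReal.add_le_add_iff_left (a := 2⁻¹ * W) (by finiteness)).mp ?_
    rwa [← add_mul, ENNReal.inv_two_add_inv_two, one_mul]
  calc W = 2 * (2⁻¹ * W) := by
        rw [← mul_assoc, ENNReal.mul_inv_cancel two_ne_zero ENNReal.ofNat_ne_top, one_mul]
    _ ≤ 2 * (ENNReal.ofReal (2 ^ (p + 1)) * J) := by gcongr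
    _ = ENNReal.ofReal (2 ^ (p + 2)) * J := by
        rw [← mul_assoc, ← ENNReal.ofReal_ofNat 2, ← ENNReal.ofReal_mul zero_le_two,
          show p + 2 = p + 1 + 1 by ring, Real.rpow_add_one two_ne_zero (p + 1), mul_comm (2 : ℝ)]

end WeightedMean

section Energy

variable {X F : Type*} [MetricSpace X] [NormedAddCommGroup F] {w : X → ℝ} {f : X → F} {x : X}
  {r p q : ℝ}

theorem mul_mul_norm_sub_rpow_le (hw0 : 0 ≤ w) (hw1 : w ≤ 1)
    (hsupp : Function.support w ⊆ closedBall x r) (hr : 0 ≤ r) (hp : 0 < p) (hq : 0 ≤ q)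
    (y z : X) :
    w y * (w z * ‖f y - f z‖ ^ p) ≤ (2 * r) ^ q * (‖f y - f z‖ ^ p / dist y z ^ q) := by
  have hright : 0 ≤ (2 * r) ^ q * (‖f y - f z‖ ^ p / dist y z ^ q) := by positivity
  by_cases hy : w y = 0
  · simpa [hy] using hright
  by_cases hz : w z = 0
  · simpa [hz] using hright
  rcases eq_or_ne y z with rfl | hyz
  · simp [Real.zero_rpow hp.ne']
  have hdist : dist y z ≤ 2 * r := by
    rw [two_mul]
    exact (dist_triangle_right y z x).trans (add_le_add (hsupp hy) (hsupp hz))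
  have hpos : 0 < dist y z := dist_pos.mpr hyz
  calc w y * (w z * ‖f y - f z‖ ^ p) ≤ 1 * (1 * ‖f y - f z‖ ^ p) := by
        gcongr
        exacts [mul_nonneg (hw0 z) (by positivity), hw1 y, hw1 z]
    _ = dist y z ^ q * (‖f y - f z‖ ^ p / dist y z ^ q) := by
        field_simp
    _ ≤ (2 * r) ^ q * (‖f y - f z‖ ^ p / dist y z ^ q) := by gcongr

variable [MeasurableSpace X] {μ : Measure X}

/-- The Gagliardo energy `∫∫ |f(x)-f(y)|^p / |x-y|^q dμ dμ` of a map from a metric measure space;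
`sphEnergy` is the case `p = n / s`, `q = 2 * n`. -/
def gagliardoEnergy (μ : Measure X) (p q : ℝ) (f : X → F) : ℝ≥0∞ :=
  ∫⁻ x, ∫⁻ y, ENNReal.ofReal (‖f x - f y‖ ^ p / dist x y ^ q) ∂μ ∂μ

theorem sq_lintegral_le_mul_gagliardoEnergy [NormedSpace ℝ F] [CompleteSpace F]
    (hw : Integrable w μ) (hw0 : 0 ≤ w) (hw1 : w ≤ 1)
    (hsupp : Function.support w ⊆ closedBall x r) (hwf : Integrable (fun y => w y • f y) μ)
    (hf : ∀ y, ‖f y‖ = 1) (h0 : ∫ y, w y • f y ∂μ = 0) (hr : 0 ≤ r) (hp : 0 < p) (hq : 0 ≤ q) :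
    (∫⁻ y, ENNReal.ofReal (w y) ∂μ) ^ 2 ≤
      ENNReal.ofReal (2 ^ (p + 2) * (2 * r) ^ q) * gagliardoEnergy μ p q f := by
  set W := ∫⁻ y, ENNReal.ofReal (w y) ∂μ
  have hWtop : W ≠ ∞ := hw.lintegral_lt_top.ne
  have hinner (y : X) : ENNReal.ofReal (w y) * W ≤ ENNReal.ofReal (2 ^ (p + 2) * (2 * r) ^ q) *
      ∫⁻ z, ENNReal.ofReal (‖f y - f z‖ ^ p / dist y z ^ q) ∂μ := calc
    _ ≤ ENNReal.ofReal (w y) * (ENNReal.ofReal (2 ^ (p + 2)) *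
          ∫⁻ z, ENNReal.ofReal (w z * ‖f y - f z‖ ^ p) ∂μ) := by
        gcongr
        exact lintegral_le_mul_lintegral_mul_norm_sub_rpow hw hw0 hwf hf h0 (hf y) hp.le
    _ = ENNReal.ofReal (2 ^ (p + 2)) *
          ∫⁻ z, ENNReal.ofReal (w y * (w z * ‖f y - f z‖ ^ p)) ∂μ := by
        rw [mul_left_comm, ← lintegral_const_mul' _ _ ENNReal.ofReal_ne_top]
        simp only [ENNReal.ofReal_mul (hw0 y)]
    _ ≤ ENNReal.ofReal (2 ^ (p + 2)) * ∫⁻ z, ENNReal.ofReal ((2 * r) ^ q *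
          (‖f y - f z‖ ^ p / dist y z ^ q)) ∂μ := by
        exact mul_le_mul_right (lintegral_mono fun z => ENNReal.ofReal_le_ofReal
          (mul_mul_norm_sub_rpow_le hw0 hw1 hsupp hr hp hq y z)) _
    _ = _ := by
        have hrq : 0 ≤ (2 * r) ^ q := by positivity
        simp only [ENNReal.ofReal_mul hrq]
        rw [lintegral_const_mul' _ _ ENNReal.ofReal_ne_top, ← mul_assoc,
          ← ENNReal.ofReal_mul (by positivity)]
  rw [sq, ← lintegral_mul_const' _ _ hWtop, gagliardoEnergy,
    ← lintegral_const_mul' _ _ ENNReal.ofReal_ne_top]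
  exact lintegral_mono hinner

end Energy

section TentKernel

variable {X : Type*} [PseudoMetricSpace X] {l r D : ℝ} {x y : X}

/-- The tent of height `1` centred at `x` with slope `l`. Its support has radius `1 / l`, and the
slope rather than the radius is the parameter so that `l = 0` gives the constant weight `1`. -/
def tentKernel (l : ℝ) (x y : X) : ℝ := max 0 (1 - l * dist x y)

theorem tentKernel_nonneg : 0 ≤ tentKernel l x := fun _ => le_max_left _ _

theorem tentKernel_le_one (hl : 0 ≤ l) : tentKernel l x ≤ 1 := fun _ =>
  max_le zero_le_one (sub_le_self 1 (mul_nonneg hl dist_nonneg))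

theorem tentKernel_zero : tentKernel 0 x y = 1 := by simp [tentKernel]

theorem continuous_tentKernel :
    Continuous fun q : (ℝ × X) × X => tentKernel q.1.1 q.1.2 q.2 := by
  unfold tentKernel
  fun_prop

theorem mul_dist_lt_one_of_tentKernel_ne_zero (h : tentKernel l x y ≠ 0) : l * dist x y < 1 := by
  contrapose! h
  exact max_eq_left (sub_nonpos.mpr h)

theorem half_le_tentKernel (hl : 0 ≤ l) (hlr : l * r ≤ 1) (hy : y ∈ ball x (r / 2)) :
    1 / 2 ≤ tentKernel l x y := by
  have := mul_le_mul_of_nonneg_left (mem_ball'.mp hy).le hl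
  exact le_max_of_le_right (by linarith)

theorem exists_support_tentKernel_subset (hD : 0 < D) (hdist : ∀ x y : X, dist x y ≤ D) :
    ∃ r, 0 < r ∧ r ≤ D ∧ l * r ≤ 1 ∧
      ∀ x : X, Function.support (tentKernel l x) ⊆ closedBall x r := by
  have hmax : 0 < max l D⁻¹ := lt_max_of_lt_right (inv_pos.mpr hD)
  refine ⟨(max l D⁻¹)⁻¹, inv_pos.mpr hmax, inv_le_of_inv_le₀ hD (le_max_right _ _), ?_, ?_⟩
  · exact mul_inv_le_one_of_le₀ (le_max_left _ _) hmax.le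
  · intro x y hy
    rw [mem_closedBall', ← one_div, le_div_iff₀' hmax, max_mul_of_nonneg _ _ dist_nonneg]
    refine max_le (mul_dist_lt_one_of_tentKernel_ne_zero hy).le ?_
    exact (inv_mul_le_one₀ hD).mpr (hdist x y)

variable [MeasurableSpace X] {μ : Measure X} {c d : ℝ}

/-- Lower Ahlfors regularity in dimension `d` up to scale `D`: balls of radius `r ≤ D` have measure
at least `c * r ^ d`. -/
def IsLowerRegular (μ : Measure X) (c d D : ℝ) : Prop :=
  ∀ (x : X) (r : ℝ), 0 < r → r ≤ D → ENNReal.ofReal (c * r ^ d) ≤ μ (ball x r)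

theorem IsLowerRegular.le_lintegral_tentKernel [OpensMeasurableSpace X]
    (hμ : IsLowerRegular μ c d D) (hl : 0 ≤ l) (hr : 0 < r) (hrD : r ≤ D) (hlr : l * r ≤ 1) :
    ENNReal.ofReal (c * (r / 2) ^ d / 2) ≤ ∫⁻ y, ENNReal.ofReal (tentKernel l x y) ∂μ := by
  have hmeas : Measurable fun y => ENNReal.ofReal (tentKernel l x y) :=
    (continuous_tentKernel.comp (Continuous.prodMk_right (l, x))).measurable.ennreal_ofReal
  have hsub : ball x (r / 2) ⊆
      {y | ENNReal.ofReal (1 / 2) ≤ ENNReal.ofReal (tentKernel l x y)} :=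
    fun _ hy => ENNReal.ofReal_le_ofReal (half_le_tentKernel hl hlr hy)
  calc ENNReal.ofReal (c * (r / 2) ^ d / 2)
      = ENNReal.ofReal (1 / 2) * ENNReal.ofReal (c * (r / 2) ^ d) := by
        rw [← ENNReal.ofReal_mul (by norm_num)]
        congr 1
        ring
    _ ≤ ENNReal.ofReal (1 / 2) * μ (ball x (r / 2)) := by
        gcongr
        exact hμ x (r / 2) (by positivity) (by linarith)
    _ ≤ _ := mul_le_mul_right (measure_mono hsub) _
    _ ≤ _ := mul_meas_ge_le_lintegral hmeas _

end TentKernel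

section TentIntegral

variable {X F : Type*} [MetricSpace X] [CompactSpace X] [MeasurableSpace X]
  [OpensMeasurableSpace X] {μ : Measure X} [IsFiniteMeasure μ]
  [NormedAddCommGroup F] {f : X → F} {c d D p l : ℝ}

theorem integrable_of_continuous (hf : Continuous f) : Integrable f μ :=
  hf.integrable_of_hasCompactSupport (.of_compactSpace f)

theorem integrable_tentKernel (x : X) : Integrable (tentKernel l x) μ :=
  integrable_of_continuous (continuous_tentKernel.comp (Continuous.prodMk_right (l, x)))

variable [NormedSpace ℝ F]

theorem integrable_tentKernel_smul (hf : Continuous f) (x : X) :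
    Integrable (fun y => tentKernel l x y • f y) μ :=
  integrable_of_continuous ((continuous_tentKernel.comp (Continuous.prodMk_right (l, x))).smul hf)

/-- The unnormalised mean of `f` around `x`, weighted by `tentKernel l x`. -/
def tentIntegral (μ : Measure X) (f : X → F) (l : ℝ) (x : X) : F :=
  ∫ y, tentKernel l x y • f y ∂μ

theorem continuous_tentIntegral (hf : Continuous f) :
    Continuous fun q : ℝ × X => tentIntegral μ f q.1 q.2 := by
  have h : Continuous (Function.uncurry fun (q : ℝ × X) y => tentKernel q.1 q.2 y • f y) :=
    continuous_tentKernel.smul (hf.comp continuous_snd)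
  simpa [tentIntegral] using continuous_parametric_integral_of_continuous (μ := μ) h isCompact_univ

theorem nullhomotopic_tentIntegral [Nonempty X] (hf : Continuous f)
    (hne : ∀ l, 0 ≤ l → ∀ x, tentIntegral μ f l x ≠ 0) (hl : 0 ≤ l)
    {g : C(X, ({0}ᶜ : Set F))} (hg : ∀ x, (g x : F) = tentIntegral μ f l x) :
    g.Nullhomotopic := by
  have hmem (q : I × X) : tentIntegral μ f (l * (unitInterval.symm q.1 : ℝ)) q.2 ∈ ({0}ᶜ : Set F) :=
    hne _ (mul_nonneg hl (unitInterval.symm q.1).2.1) q.2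
  have hcont : Continuous fun q : I × X => tentIntegral μ f (l * (unitInterval.symm q.1 : ℝ)) q.2 :=
    (continuous_tentIntegral hf).comp
      (f := fun q : I × X => (l * (unitInterval.symm q.1 : ℝ), q.2)) (by fun_prop)
  obtain ⟨x₀⟩ := ‹Nonempty X›
  refine ⟨⟨_, hmem (1, x₀)⟩, ⟨⟨⟨fun q => ⟨_, hmem q⟩, hcont.subtype_mk hmem⟩, ?_, ?_⟩⟩⟩
  · intro x
    exact Subtype.ext (by simp [hg])
  · intro x
    exact Subtype.ext (by simp [tentIntegral, tentKernel_zero])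

/-- The constant produced by comparing, at scale `r`, the lower bound `c * (r / 2) ^ d / 2` for the
mass of a tent with the factor `2 ^ (p + 2) * (2 * r) ^ (2 * d)` in front of the energy. -/
def energyThreshold (c d p : ℝ) : ℝ := c ^ 2 / (4 * 16 ^ d * 2 ^ (p + 2))

theorem energyThreshold_pos (hc : 0 < c) : 0 < energyThreshold c d p := by
  unfold energyThreshold
  positivity

theorem mul_energyThreshold {r : ℝ} (hr : 0 < r) :
    2 ^ (p + 2) * (2 * r) ^ (2 * d) * energyThreshold c d p = (c * (r / 2) ^ d / 2) ^ 2 := by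
  have hpow : (2 * r) ^ (2 * d) = 16 ^ d * ((r / 2) ^ d) ^ 2 := by
    rw [← Real.rpow_mul_natCast (by positivity) d 2, mul_comm d, Nat.cast_ofNat,
      Real.rpow_mul (by positivity), Real.rpow_mul (by positivity),
      ← Real.mul_rpow (by norm_num) (by positivity), Real.rpow_two, Real.rpow_two]
    congr 1
    ring
  rw [hpow, energyThreshold]
  field_simp
  ring

variable [CompleteSpace F]

theorem IsLowerRegular.tentIntegral_ne_zero (hμ : IsLowerRegular μ c d D) (hc : 0 ≤ c)
    (hd : 0 ≤ d) (hD : 0 < D) (hdist : ∀ x y : X, dist x y ≤ D) (hp : 0 < p) (hf : Continuous f)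
    (hf1 : ∀ y, ‖f y‖ = 1)
    (hE : gagliardoEnergy μ p (2 * d) f < ENNReal.ofReal (energyThreshold c d p))
    (hl : 0 ≤ l) (x : X) : tentIntegral μ f l x ≠ 0 := by
  intro h0
  obtain ⟨r, hr, hrD, hlr, hsupp⟩ := exists_support_tentKernel_subset (l := l) hD hdist
  have hK : 0 < (2 : ℝ) ^ (p + 2) * (2 * r) ^ (2 * d) := by positivity
  have hlow := hμ.le_lintegral_tentKernel (x := x) hl hr hrD hlr
  have hup := sq_lintegral_le_mul_gagliardoEnergy (integrable_tentKernel (μ := μ) x)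
    tentKernel_nonneg (tentKernel_le_one hl) (hsupp x) (integrable_tentKernel_smul hf x) hf1 h0
    hr.le hp (mul_nonneg zero_le_two hd)
  refine lt_irrefl (ENNReal.ofReal ((c * (r / 2) ^ d / 2) ^ 2)) ?_
  calc ENNReal.ofReal ((c * (r / 2) ^ d / 2) ^ 2)
      ≤ (∫⁻ y, ENNReal.ofReal (tentKernel l x y) ∂μ) ^ 2 := by
        rw [ENNReal.ofReal_pow (by positivity)]
        gcongr
    _ ≤ _ := hup
    _ < ENNReal.ofReal (2 ^ (p + 2) * (2 * r) ^ (2 * d)) *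
          ENNReal.ofReal (energyThreshold c d p) :=
        ENNReal.mul_lt_mul_right (by simpa using hK) ENNReal.ofReal_ne_top hE
    _ = ENNReal.ofReal ((c * (r / 2) ^ d / 2) ^ 2) := by
        rw [← ENNReal.ofReal_mul hK.le, mul_energyThreshold hr]

theorem IsLowerRegular.integral_tentKernel_pos (hμ : IsLowerRegular μ c d D) (hc : 0 < c)
    (hD : 0 < D) (hl : 0 < l) (x : X) : 0 < ∫ y, tentKernel l x y ∂μ := by
  have hr : 0 < min l⁻¹ D := lt_min (inv_pos.mpr hl) hD
  have hlr : l * min l⁻¹ D ≤ 1 := by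
    simpa [hl.ne'] using mul_le_mul_of_nonneg_left (min_le_left l⁻¹ D) hl.le
  have hlow := hμ.le_lintegral_tentKernel (x := x) hl.le hr (min_le_right _ _) hlr
  rw [← ofReal_integral_eq_lintegral_ofReal (integrable_tentKernel x)
    (.of_forall tentKernel_nonneg)] at hlow
  exact ENNReal.ofReal_pos.mp ((ENNReal.ofReal_pos.mpr (by positivity)).trans_le hlow)

theorem IsLowerRegular.exists_zero_notMem_segment_tentIntegral (hμ : IsLowerRegular μ c d D)
    (hc : 0 < c) (hD : 0 < D) (hf : Continuous f) (hf1 : ∀ y, ‖f y‖ = 1) :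
    ∃ l : ℝ, 0 < l ∧ ∀ x, (0 : F) ∉ segment ℝ (f x) (tentIntegral μ f l x) := by
  obtain ⟨δ, hδ, hfδ⟩ := Metric.uniformContinuous_iff.mp
    (CompactSpace.uniformContinuous_of_continuous hf) (1 / 2) (by norm_num)
  refine ⟨δ⁻¹, inv_pos.mpr hδ, fun x => zero_notMem_segment_of_norm_sub_smul_lt
    (W := ∫ y, tentKernel δ⁻¹ x y ∂μ) ?_⟩
  have hclose : ∀ y, tentKernel δ⁻¹ x y ≠ 0 → ‖f y - f x‖ ≤ 1 / 2 := fun y hy => by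
    have hxy : dist x y < δ := by
      simpa [inv_mul_lt_iff₀ hδ] using mul_dist_lt_one_of_tentKernel_ne_zero hy
    rw [← dist_eq_norm, dist_comm]
    exact (hfδ hxy).le
  have hmass := hμ.integral_tentKernel_pos hc hD (inv_pos.mpr hδ) x
  have hmean := norm_integral_smul_sub_le (integrable_tentKernel (μ := μ) x) tentKernel_nonneg
    (integrable_tentKernel_smul hf x) hclose
  rw [hf1 x, mul_one]
  exact hmean.trans_lt (by linarith)

theorem IsLowerRegular.nullhomotopic_of_gagliardoEnergy_lt [Nonempty X]
    (hμ : IsLowerRegular μ c d D) (hc : 0 < c) (hd : 0 ≤ d) (hD : 0 < D)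
    (hdist : ∀ x y : X, dist x y ≤ D) (hp : 0 < p) (u : C(X, sphere (0 : F) 1))
    (hE : gagliardoEnergy μ p (2 * d) (fun x => (u x : F)) <
      ENNReal.ofReal (energyThreshold c d p)) : u.Nullhomotopic := by
  have hu : Continuous fun x => (u x : F) := by fun_prop
  have hu1 (x : X) : ‖(u x : F)‖ = 1 := norm_eq_of_mem_sphere (u x)
  have hne (l : ℝ) (hl : 0 ≤ l) (x : X) : tentIntegral μ (fun x => (u x : F)) l x ≠ 0 :=
    hμ.tentIntegral_ne_zero hc.le hd hD hdist hp hu hu1 hE hl x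
  obtain ⟨l, hl, hseg⟩ := hμ.exists_zero_notMem_segment_tentIntegral hc hD hu hu1
  let f : C(X, ({0}ᶜ : Set F)) := ⟨fun x => ⟨u x, ne_zero_of_mem_unit_sphere (u x)⟩, by fun_prop⟩
  let g : C(X, ({0}ᶜ : Set F)) := ⟨fun x => ⟨_, hne l hl.le x⟩,
    ((continuous_tentIntegral hu).comp (Continuous.prodMk_right l)).subtype_mk _⟩
  have hfg : f.Homotopic g := homotopic_of_segment_subset fun x =>
    subset_compl_singleton_iff.mpr (hseg x)
  obtain ⟨y, hgy⟩ : g.Nullhomotopic := nullhomotopic_tentIntegral hu hne hl.le fun _ => rfl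
  exact nullhomotopic_of_nullhomotopic_compl_zero ⟨y, hfg.trans hgy⟩ fun _ => rfl

end TentIntegral

section Sphere

theorem ball_subset_image_orthogonalProjection_ball {E : Type*} [NormedAddCommGroup E]
    [InnerProductSpace ℝ E] (x : sphere (0 : E) 1) {r : ℝ} (hr : r ≤ 2) :
    ball 0 (r / 2) ⊆
      (fun y : sphere (0 : E) 1 => (ℝ ∙ (x : E))ᗮ.orthogonalProjectionOnto y) '' ball x r := by
  intro v hv
  rw [mem_ball_zero_iff, Submodule.coe_norm] at hv
  have hq0 := norm_nonneg (v : E)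
  have hx : ‖(x : E)‖ = 1 := norm_eq_of_mem_sphere x
  have horth : inner ℝ (v : E) (x : E) = 0 :=
    Submodule.mem_orthogonal_singleton_iff_inner_left.mp v.2
  have hpyth (t : ℝ) : ‖(v : E) + t • (x : E)‖ ^ 2 = ‖(v : E)‖ ^ 2 + t ^ 2 := by
    rw [norm_add_sq_real, inner_smul_right, horth, norm_smul, hx]
    simp
  set a := √(1 - ‖(v : E)‖ ^ 2)
  have ha0 : 0 ≤ a := Real.sqrt_nonneg _
  have ha2 : a ^ 2 = 1 - ‖(v : E)‖ ^ 2 := Real.sq_sqrt (by nlinarith)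
  refine ⟨⟨v + a • (x : E), ?_⟩, ?_, ?_⟩
  · rw [mem_sphere_zero_iff_norm, ← sq_eq_sq₀ (norm_nonneg _) zero_le_one, hpyth, ha2]
    ring
  · rw [mem_ball, Subtype.dist_eq, dist_eq_norm]
    have hdist : ‖(v : E) + a • (x : E) - x‖ ^ 2 = ‖(v : E)‖ ^ 2 + (a - 1) ^ 2 := by
      rw [← hpyth, sub_smul, one_smul, add_sub_assoc]
    refine lt_of_pow_lt_pow_left₀ 2 (by linarith) ?_
    rw [hdist]
    nlinarith
  · simp [Submodule.orthogonalProjectionOnto_orthogonalComplement_singleton_eq_zero]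

theorem fact_finrank_euclideanSpace_succ (n : ℕ) :
    Fact (Module.finrank ℝ (EuclideanSpace ℝ (Fin (n + 1))) = n + 1) := ⟨by simp⟩

theorem exists_isLowerRegular_sphere (n : ℕ) :
    ∃ c : ℝ, 0 < c ∧ IsLowerRegular (μH[(n : ℝ)] : Measure (Sph n)) c n 2 := by
  have := fact_finrank_euclideanSpace_succ n
  let ν : Measure (EuclideanSpace ℝ (Fin n)) := μH[(n : ℝ)]
  have hν : 0 < ν.real (ball 0 1) :=
    ENNReal.toReal_pos (measure_ball_pos _ _ one_pos).ne' measure_ball_lt_top.ne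
  refine ⟨ν.real (ball 0 1) / 2 ^ n, by positivity, fun x r hr hr2 => ?_⟩
  let U := (ℝ ∙ (x : EuclideanSpace ℝ (Fin (n + 1))))ᗮ
  let e : U ≃ₗᵢ[ℝ] EuclideanSpace ℝ (Fin n) :=
    (OrthonormalBasis.fromOrthogonalSpanSingleton n (ne_zero_of_mem_unit_sphere x)).repr
  let P : Sph n → EuclideanSpace ℝ (Fin n) := fun y => e (U.orthogonalProjectionOnto y)
  have hP : LipschitzWith 1 P := by
    have h := (e.lipschitz.comp U.lipschitzWith_orthogonalProjectionOnto).comp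
      (LipschitzWith.subtype_val (sphere (0 : EuclideanSpace ℝ (Fin (n + 1))) 1))
    rwa [one_mul, one_mul] at h
  have hsub : ball 0 (r / 2) ⊆ P '' ball x r := by
    rw [← map_zero e, ← e.image_ball]
    exact (image_mono (ball_subset_image_orthogonalProjection_ball x hr2)).trans
      (image_image e _ _).subset
  calc ENNReal.ofReal (ν.real (ball 0 1) / 2 ^ n * r ^ (n : ℝ))
      = ENNReal.ofReal ((r / 2) ^ n) * ENNReal.ofReal (ν.real (ball 0 1)) := by
        rw [← ENNReal.ofReal_mul (by positivity), Real.rpow_natCast, div_pow]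
        congr 1
        ring
    _ = ν (ball 0 (r / 2)) := by
        rw [Measure.addHaar_ball_of_pos _ _ (by positivity), finrank_euclideanSpace_fin,
          ofReal_measureReal measure_ball_lt_top.ne]
    _ ≤ ν (P '' ball x r) := measure_mono hsub
    _ ≤ μH[(n : ℝ)] (ball x r) := by
        simpa using hP.hausdorffMeasure_image_le (Nat.cast_nonneg n) (ball x r)

theorem isFiniteMeasure_hausdorffMeasure_sphere (n : ℕ) :
    IsFiniteMeasure (μH[(n : ℝ)] : Measure (Sph n)) := by
  have := fact_finrank_euclideanSpace_succ n
  suffices hfin : IsLocallyFiniteMeasure (μH[(n : ℝ)] : Measure (Sph n)) from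
    ⟨isCompact_univ.measure_lt_top⟩
  refine ⟨fun x => ?_⟩
  let φ := extChartAt (𝓡 n) x
  have hsmooth : ContDiffAt ℝ 1 (fun w => (φ.symm w : EuclideanSpace ℝ (Fin (n + 1)))) (φ x) :=
    ((contMDiff_coe_sphere (m := 1)).contMDiffAt.comp _
      ((contMDiffOn_extChartAt_symm x).contMDiffAt (extChartAt_target_mem_nhds x))).contDiffAt
  obtain ⟨K, t, ht, hK⟩ := hsmooth.exists_lipschitzOnWith
  obtain ⟨ρ, hρ, hρt⟩ := Metric.mem_nhds_iff.mp ht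
  have hlip : LipschitzOnWith K φ.symm (ball (φ x) ρ) := fun a ha b hb => hK (hρt ha) (hρt hb)
  refine ⟨φ.source ∩ φ ⁻¹' ball (φ x) ρ, Filter.inter_mem (extChartAt_source_mem_nhds x)
    ((continuousAt_extChartAt x).preimage_mem_nhds (ball_mem_nhds _ hρ)), ?_⟩
  have hsub : φ.source ∩ φ ⁻¹' ball (φ x) ρ ⊆ φ.symm '' ball (φ x) ρ :=
    fun y hy => ⟨φ y, hy.2, φ.left_inv hy.1⟩
  calc μH[(n : ℝ)] (φ.source ∩ φ ⁻¹' ball (φ x) ρ)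
      ≤ μH[(n : ℝ)] (φ.symm '' ball (φ x) ρ) := measure_mono hsub
    _ ≤ (K : ℝ≥0∞) ^ (n : ℝ) * μH[(n : ℝ)] (ball (φ x) ρ) :=
        hlip.hausdorffMeasure_image_le (Nat.cast_nonneg n)
    _ < ∞ := ENNReal.mul_lt_top (by finiteness) measure_ball_lt_top

theorem dist_le_two_of_mem_sphere {E : Type*} [SeminormedAddCommGroup E]
    (x y : sphere (0 : E) 1) : dist x y ≤ 2 := calc
  dist x y ≤ ‖(x : E)‖ + ‖(y : E)‖ := dist_le_norm_add_norm _ _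
  _ = 2 := by rw [norm_eq_of_mem_sphere, norm_eq_of_mem_sphere, one_add_one_eq_two]

end Sphere

theorem stmt10_general (n : ℕ) {p : ℝ} (hp : 0 < p) :
    ∃ ε : ℝ, 0 < ε ∧
      ∀ (F : Type*) [NormedAddCommGroup F] [NormedSpace ℝ F] [CompleteSpace F]
        (u : Sph n → sphere (0 : F) 1), Continuous u →
        gagliardoEnergy μH[(n : ℝ)] p (2 * n) (fun x => (u x : F)) < ENNReal.ofReal ε →
        ∃ c : sphere (0 : F) 1, Homotopic u (fun _ => c) := by
  have := isFiniteMeasure_hausdorffMeasure_sphere n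
  obtain ⟨c, hc, hreg⟩ := exists_isLowerRegular_sphere n
  have : Nonempty (Sph n) := (NormedSpace.sphere_nonempty.mpr zero_le_one).to_subtype
  refine ⟨energyThreshold c n p, energyThreshold_pos hc, fun F _ _ _ u hu hE => ?_⟩
  obtain ⟨y, ⟨H⟩⟩ := hreg.nullhomotopic_of_gagliardoEnergy_lt hc n.cast_nonneg two_pos
    dist_le_two_of_mem_sphere hp ⟨u, hu⟩ hE
  exact ⟨y, H, H.continuous, H.apply_zero, H.apply_one⟩

/-- continuous maps `𝕊ⁿ → 𝕊^m` of sufficiently small `E_{s,n/s}`-energy are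
homotopic to a constant map. -/
theorem stmt10 (n m : ℕ) (hn : 1 ≤ n) (hm : 1 ≤ m) (s : ℝ) (hs : 0 < s) (hs1 : s < 1) :
    ∃ ε : ℝ, 0 < ε ∧
      ∀ u : Sph n → Sph m, Continuous u →
        sphEnergy n m s u < ENNReal.ofReal ε →
        ∃ c : Sph m, Homotopic u (fun _ => c) := by
  obtain ⟨ε, hε, h⟩ := stmt10_general n (div_pos (Nat.cast_pos.mpr hn) hs)
  exact ⟨ε, hε, fun u => h _ u⟩
end
end
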